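/- Downward-crossing segment bound: suppose 0 ≤ τ_l < τ_r ≤ T, Δ(τ_l) = 0, Δ(τ_r) = −β, and −β < Δ(t) < 0 for all t with τ_l < t < τ_r. Then Σ_{t=τ_l+1}^{τ_r−1} ( g_t(1) − g_t(0) ) ≤ β. -/

import Mathlib

/-- The cumulative cost difference `Δ(t)`, with `Δ(0) = −β` and
`Δ(t) = min{0, max{−β, Δ(t−1) + (g_t(0) − g_t(1))}}`. -/
noncomputable def Δfun (β : ℝ) (g0 g1 : ℕ → ℝ) : ℕ → ℝ
  | 0 => -β
  | t + 1 => min 0 (max (-β) (Δfun β g0 g1 t + (g0 (t + 1) - g1 (t + 1))))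

/-!
While `Δ` stays strictly above the floor `−β`, only the clipping at `0` can be active, and it only
lowers `Δ`; so each step increases `Δ` by at most `g_t(0) − g_t(1)`. Telescoping, the total of
`g_t(1) − g_t(0)` is at most the drop of `Δ`, and `Δ` cannot drop below `−β`.
-/

section

variable {β : ℝ} {g0 g1 : ℕ → ℝ}

theorem neg_le_Δfun (hβ : 0 ≤ β) (t : ℕ) : -β ≤ Δfun β g0 g1 t := by
  cases t with
  | zero => exact le_rfl
  | succ t => exact le_min (neg_nonpos.2 hβ) (le_max_left _ _)

theorem Δfun_succ_le_of_neg_lt {t : ℕ} (h : -β < Δfun β g0 g1 (t + 1)) :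
    Δfun β g0 g1 (t + 1) ≤ Δfun β g0 g1 t + (g0 (t + 1) - g1 (t + 1)) := by
  have le_clipped : Δfun β g0 g1 (t + 1) ≤
      max (-β) (Δfun β g0 g1 t + (g0 (t + 1) - g1 (t + 1))) :=
    min_le_right _ _
  exact (le_max_iff.1 le_clipped).resolve_left h.not_ge

theorem sum_Ioc_sub_le_Δfun_sub {m n : ℕ} (hmn : m ≤ n)
    (h : ∀ t ∈ Finset.Ioc m n, -β < Δfun β g0 g1 t) :
    ∑ t ∈ Finset.Ioc m n, (g1 t - g0 t) ≤ Δfun β g0 g1 m - Δfun β g0 g1 n := by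
  induction n, hmn using Nat.le_induction with
  | base => simp
  | succ n hmn ih =>
    have sum_le := ih fun t ht => h t (Finset.Ioc_subset_Ioc_right n.le_succ ht)
    have step_le := Δfun_succ_le_of_neg_lt <|
      h (n + 1) (Finset.mem_Ioc.2 ⟨Nat.lt_succ_of_le hmn, le_rfl⟩)
    rw [Finset.sum_Ioc_succ_top hmn]
    linarith

theorem stmt15_general (hβ : 0 ≤ β) {τl τr : ℕ} (hlr : τl < τr)
    (h : ∀ t ∈ Finset.Ioo τl τr, -β < Δfun β g0 g1 t) :
    ∑ t ∈ Finset.Ioo τl τr, (g1 t - g0 t) ≤ Δfun β g0 g1 τl + β := by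
  obtain ⟨n, rfl⟩ := Nat.exists_eq_add_one_of_ne_zero (Nat.ne_zero_of_lt hlr)
  rw [Finset.Ioo_add_one_right_eq_Ioc] at h ⊢
  calc ∑ t ∈ Finset.Ioc τl n, (g1 t - g0 t)
      ≤ Δfun β g0 g1 τl - Δfun β g0 g1 n := sum_Ioc_sub_le_Δfun_sub (Nat.lt_succ_iff.1 hlr) h
    _ ≤ Δfun β g0 g1 τl + β := by linarith [neg_le_Δfun (g0 := g0) (g1 := g1) hβ n]

end

/-- downward-crossing segment bound: if `Δ(τ_l) = 0`,
`Δ(τ_r) = −β` and `−β < Δ(t) < 0` strictly inside the segment, then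
`Σ_{t=τ_l+1}^{τ_r−1} (g_t(1) − g_t(0)) ≤ β`. -/
theorem stmt15 (T : ℕ) (β : ℝ) (hβ : 0 ≤ β) (g0 g1 : ℕ → ℝ)
    (hg0 : ∀ t, 1 ≤ t → t ≤ T → 0 ≤ g0 t) (hg1 : ∀ t, 1 ≤ t → t ≤ T → 0 ≤ g1 t)
    (τl τr : ℕ) (hlr : τl < τr) (hrT : τr ≤ T)
    (hl : Δfun β g0 g1 τl = 0) (hr : Δfun β g0 g1 τr = -β)
    (hmid : ∀ t, τl < t → t < τr → -β < Δfun β g0 g1 t ∧ Δfun β g0 g1 t < 0) :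
    ∑ t ∈ Finset.Ioo τl τr, (g1 t - g0 t) ≤ β := by
  simpa only [hl, zero_add] using stmt15_general hβ hlr fun t ht =>
    (hmid t (Finset.mem_Ioo.1 ht).1 (Finset.mem_Ioo.1 ht).2).1
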